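/- arXiv:2310.10241 — 2 statements merged into one kernel-verified Lean document; each statement's English description precedes it below -/
import Mathlib

section
/- Let A be a nonempty finite subset of an abelian semigroup (G,+). For h ≥ 1 set d_h = |hA|, and set d_0 = 1. Then d_{h+1} ≤ d_h^⟨h⟩ for all h ≥ 1. -/
open scoped Pointwise

/-- `macaulay h a` is the Macaulay operator `a ↦ a^⟨h⟩`, computed via the greedy
construction of the `h`-binomial representation of `a`: writing
`a = C(a_h,h) + C(a_{h-1},h-1) + ⋯ + C(a_1,1)` with `a_h > a_{h-1} > ⋯ > a_1 ≥ 0`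
(where `a_h` is the largest integer with `C(a_h,h) ≤ a`, and so on), one sets
`a^⟨h⟩ = C(a_h+1,h+1) + C(a_{h-1}+1,h) + ⋯ + C(a_1+1,2)`, and `0^⟨h⟩ = 0`. -/
def macaulay : ℕ → ℕ → ℕ
  | 0, _ => 0
  | h + 1, a =>
    if a = 0 then 0
    else
      let m := Nat.findGreatest (fun k => Nat.choose k (h + 1) ≤ a) (a + h + 1)
      Nat.choose (m + 1) (h + 2) + macaulay h (a - Nat.choose m (h + 1))

/-- The `h`-fold iterated sumset `hA = A + ⋯ + A` (`h` summands), for `h ≥ 1`.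
(The value at `h = 0` is irrelevant; it is set to `A` by convention.) -/
def iterSumset {G : Type*} [AddCommSemigroup G] (A : Set G) : ℕ → Set G
  | 0 => A
  | 1 => A
  | h + 2 => iterSumset A (h + 1) + A

/-!
Adjoin a zero to `G` and list `A` as `a_1, …, a_n`; then `hA` is the image of the monomials of
degree `h` in `x_1, …, x_n` under the homomorphism `x_i ↦ a_i`. Picking the lexicographically least
monomial over each element of `hA` gives sets of monomials closed under division by a variable, and
the claim becomes Macaulay's theorem for two consecutive layers `M` and `N` (degrees `h + 1`
and `h`) of such a family.

Fix a variable `x`. Compression towards `x` preserves both cardinalities and the shadow condition,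
and repeated compression makes `N` stable: replacing any variable by `x` stays in `N`. Let `M₀`
and `N₀` be the parts without `x`. Then `|M| = |M₀| + |M : x|` with `M : x ⊆ N`, while induction on
the number of variables gives `|M₀| ≤ |N₀|^⟨h⟩`. Stability means that `N` and `N : x` again satisfy
the shadow condition, so for `h ≥ 2` Macaulay's theorem in degree `h - 1` yields Green's bound
`|N₀| ≤ |N|_⟨h⟩`, and the identity `(r_⟨h⟩)^⟨h⟩ + r = r^⟨h⟩` finishes the proof.
-/

/-- The Green operator `r ↦ r_⟨h⟩ = C(r_h - 1, h) + ⋯ + C(r_1 - 1, 1)`, computed from the same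
greedy `h`-binomial representation as `macaulay`. It bounds the number of monomials of a stable
set that avoid the distinguished variable. -/
def green : ℕ → ℕ → ℕ
  | 0, _ => 0
  | h + 1, a =>
    if a = 0 then 0
    else
      let m := Nat.findGreatest (fun k => Nat.choose k (h + 1) ≤ a) (a + h + 1)
      Nat.choose (m - 1) (h + 1) + green h (a - Nat.choose m (h + 1))

section BinomialRepresentation

theorem lt_of_choose_lt_choose {m n k : ℕ} (h : m.choose k < n.choose k) : m < n :=
  (Nat.choose_mono k).reflect_lt h

theorem le_choose_add (h m : ℕ) : m ≤ m.choose (h + 1) + h := by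
  induction m with
  | zero => simp
  | succ m ih =>
    rcases lt_or_ge m h with hm | hm
    · omega
    · have := Nat.choose_pos hm
      rw [Nat.choose_succ_succ']
      omega

theorem findGreatest_choose_le {h m r : ℕ} (hr : r < m.choose h) :
    Nat.findGreatest (fun k => k.choose (h + 1) ≤ m.choose (h + 1) + r)
      (m.choose (h + 1) + r + h + 1) = m := by
  rw [Nat.findGreatest_eq_iff]
  refine ⟨?_, fun _ => Nat.le_add_right _ _, fun n hmn _ hn => ?_⟩
  · have := le_choose_add h m
    omega
  · have := Nat.choose_le_choose (h + 1) (show m + 1 ≤ n from hmn)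
    rw [Nat.choose_succ_succ'] at this
    omega

theorem exists_eq_choose_add (h a : ℕ) :
    ∃ m r, h ≤ m ∧ r < m.choose h ∧ a = m.choose (h + 1) + r := by
  induction a with
  | zero => exact ⟨h, 0, le_rfl, by simp, by simp⟩
  | succ a ih =>
    obtain ⟨m, r, hm, hr, rfl⟩ := ih
    rcases (Nat.succ_le_of_lt hr).lt_or_eq with hlt | heq
    · exact ⟨m, r + 1, hm, hlt, rfl⟩
    · refine ⟨m + 1, 0, by omega, Nat.choose_pos (by omega), ?_⟩
      rw [Nat.choose_succ_succ', ← heq]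
      omega

theorem exists_eq_choose_succ_add (h : ℕ) {a : ℕ} (ha : a ≠ 0) :
    ∃ m r, h ≤ m ∧ r < (m + 1).choose h ∧ a = (m + 1).choose (h + 1) + r := by
  obtain ⟨m, r, hm, hr, rfl⟩ := exists_eq_choose_add h a
  have hlt : h < m := by
    by_contra! hle
    obtain rfl : m = h := le_antisymm hle hm
    simp_all
  obtain ⟨m, rfl⟩ := Nat.exists_eq_add_of_lt hlt
  exact ⟨h + m, r, by omega, hr, rfl⟩

@[simp]
theorem macaulay_zero_right (h : ℕ) : macaulay h 0 = 0 := by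
  cases h <;> simp [macaulay]

@[simp]
theorem green_zero_right (h : ℕ) : green h 0 = 0 := by
  cases h <;> simp [green]

theorem macaulay_choose_add {h m r : ℕ} (hr : r < m.choose h) :
    macaulay (h + 1) (m.choose (h + 1) + r) = (m + 1).choose (h + 2) + macaulay h r := by
  rw [macaulay]
  split_ifs with h0
  · obtain ⟨hm, rfl⟩ := Nat.add_eq_zero_iff.1 h0
    rw [Nat.choose_eq_zero_iff] at hm
    rw [macaulay_zero_right, Nat.choose_eq_zero_of_lt (by omega)]
  · simp only [findGreatest_choose_le hr, Nat.add_sub_cancel_left]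

theorem green_choose_add {h m r : ℕ} (hr : r < m.choose h) :
    green (h + 1) (m.choose (h + 1) + r) = (m - 1).choose (h + 1) + green h r := by
  rw [green]
  split_ifs with h0
  · obtain ⟨hm, rfl⟩ := Nat.add_eq_zero_iff.1 h0
    rw [Nat.choose_eq_zero_iff] at hm
    rw [green_zero_right, Nat.choose_eq_zero_of_lt (by omega)]
  · simp only [findGreatest_choose_le hr, Nat.add_sub_cancel_left]

theorem green_choose_succ_add {h m r : ℕ} (hr : r < (m + 1).choose h) :
    green (h + 1) ((m + 1).choose (h + 1) + r) = m.choose (h + 1) + green h r :=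
  green_choose_add hr

theorem green_one (a : ℕ) : green 1 a = a - 1 := by
  simpa using green_choose_add (h := 0) (m := a) (r := 0) (by simp)

theorem macaulay_one (a : ℕ) : macaulay 1 a = (a + 1).choose 2 := by
  simpa using macaulay_choose_add (h := 0) (m := a) (r := 0) (by simp)

theorem macaulay_lt_choose {h m r : ℕ} (hr : r < m.choose h) :
    macaulay h r < (m + 1).choose (h + 1) := by
  induction h generalizing m r with
  | zero => simp [macaulay]
  | succ h ih =>
    obtain ⟨n, t, -, ht, rfl⟩ := exists_eq_choose_add h r
    have hnm : n + 1 ≤ m := lt_of_choose_lt_choose ((Nat.le_add_right _ t).trans_lt hr)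
    calc macaulay (h + 1) (n.choose (h + 1) + t)
        = (n + 1).choose (h + 2) + macaulay h t := macaulay_choose_add ht
      _ < (n + 1).choose (h + 2) + (n + 1).choose (h + 1) := by gcongr; exact ih ht
      _ = (n + 2).choose (h + 2) := by rw [Nat.choose_succ_succ' (n + 1), add_comm]
      _ ≤ (m + 1).choose (h + 2) := Nat.choose_le_choose _ (by omega)

theorem macaulay_mono (h : ℕ) : Monotone (macaulay h) := by
  induction h with
  | zero => exact monotone_const
  | succ h ih =>
    intro a b hab
    obtain ⟨m, r, -, hr, rfl⟩ := exists_eq_choose_add h a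
    obtain ⟨n, t, -, ht, rfl⟩ := exists_eq_choose_add h b
    rcases lt_trichotomy m n with hmn | rfl | hnm
    · have hlt : m.choose (h + 1) + r < (m + 1).choose (h + 1) := by
        rw [Nat.choose_succ_succ']
        omega
      calc macaulay (h + 1) (m.choose (h + 1) + r)
          ≤ (m + 2).choose (h + 2) := (macaulay_lt_choose hlt).le
        _ ≤ (n + 1).choose (h + 2) := Nat.choose_le_choose _ (by omega)
        _ ≤ macaulay (h + 1) (n.choose (h + 1) + t) := by
          rw [macaulay_choose_add ht]
          exact Nat.le_add_right _ _
    · rw [macaulay_choose_add hr, macaulay_choose_add ht]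
      gcongr
      exact ih (by omega)
    · have := Nat.choose_le_choose (h + 1) (show n + 1 ≤ m from hnm)
      rw [Nat.choose_succ_succ'] at this
      omega

theorem green_lt_choose {h m r : ℕ} (hm : h ≤ m) (hr : r < (m + 1).choose h) :
    green h r < m.choose h := by
  induction h generalizing m r with
  | zero => simp [green]
  | succ h ih =>
    rcases eq_or_ne r 0 with rfl | hr0
    · simpa using Nat.choose_pos hm
    obtain ⟨n, t, hn, ht, rfl⟩ := exists_eq_choose_succ_add h hr0
    have hnm : n + 1 < m + 1 := lt_of_choose_lt_choose ((Nat.le_add_right _ t).trans_lt hr)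
    calc green (h + 1) ((n + 1).choose (h + 1) + t)
        = n.choose (h + 1) + green h t := green_choose_succ_add ht
      _ < n.choose (h + 1) + n.choose h := by gcongr; exact ih hn ht
      _ = (n + 1).choose (h + 1) := by rw [Nat.choose_succ_succ' n, add_comm]
      _ ≤ m.choose (h + 1) := Nat.choose_le_choose _ (by omega)

theorem macaulay_green_add (h r : ℕ) :
    macaulay (h + 1) (green (h + 1) r) + r = macaulay (h + 1) r := by
  induction h generalizing r with
  | zero =>
    rcases eq_or_ne r 0 with rfl | hr
    · simp
    obtain ⟨n, rfl⟩ := Nat.exists_eq_succ_of_ne_zero hr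
    rw [green_one, macaulay_one, macaulay_one, Nat.choose_succ_succ' (n + 1)]
    simp [add_comm]
  | succ h ih =>
    rcases eq_or_ne r 0 with rfl | hr
    · simp
    obtain ⟨n, t, hn, ht, rfl⟩ := exists_eq_choose_succ_add (h + 1) hr
    rw [green_choose_succ_add ht, macaulay_choose_add (green_lt_choose hn ht),
      macaulay_choose_add ht, Nat.choose_succ_succ' (n + 1), ← ih t]
    ring

theorem le_green_add_choose {h m r : ℕ} (hr : r < (m + 1).choose (h + 1)) :
    r ≤ green (h + 1) r + m.choose h := by
  induction h generalizing m r with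
  | zero =>
    rw [green_one, Nat.choose_zero_right]
    omega
  | succ h ih =>
    rcases eq_or_ne r 0 with rfl | hr0
    · exact Nat.zero_le _
    obtain ⟨n, t, -, ht, rfl⟩ := exists_eq_choose_succ_add (h + 1) hr0
    have hnm : n + 1 < m + 1 := lt_of_choose_lt_choose ((Nat.le_add_right _ t).trans_lt hr)
    have hpascal : n.choose h + n.choose (h + 1) ≤ m.choose (h + 1) := by
      rw [← Nat.choose_succ_succ']
      exact Nat.choose_le_choose _ (by omega)
    have := ih ht
    rw [green_choose_succ_add ht, Nat.choose_succ_succ' n]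
    omega

-- By Pascal's rule `p - green (h + 1) p` is `C(p_{h+1} - 1, h) + C(p_h - 1, h - 1) + ⋯`, the
-- smallest `c` for which `macaulay h c` can reach `p`.
theorem le_add_green_of_le_macaulay {h p c : ℕ} (hp : p ≤ macaulay h c) :
    p ≤ c + green (h + 1) p := by
  induction h generalizing p c with
  | zero =>
    rw [macaulay] at hp
    omega
  | succ h ih =>
    rcases eq_or_ne p 0 with rfl | hp0
    · exact Nat.zero_le _
    obtain ⟨m, r, -, hr, rfl⟩ := exists_eq_choose_succ_add (h + 1) hp0
    obtain ⟨n, t, -, ht, rfl⟩ := exists_eq_choose_add h c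
    rw [macaulay_choose_add ht] at hp
    rw [green_choose_succ_add hr, Nat.choose_succ_succ' m]
    have hmn : m + 1 < n + 2 := by
      refine lt_of_choose_lt_choose (k := h + 2) ?_
      calc (m + 1).choose (h + 2)
          ≤ (n + 1).choose (h + 2) + macaulay h t := (Nat.le_add_right _ r).trans hp
        _ < (n + 1).choose (h + 2) + (n + 1).choose (h + 1) := by
          gcongr
          exact macaulay_lt_choose ht
        _ = (n + 2).choose (h + 2) := by rw [Nat.choose_succ_succ' (n + 1), add_comm]
    rcases (show m ≤ n by omega).eq_or_lt with rfl | hlt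
    · have := ih (Nat.le_of_add_le_add_left hp)
      omega
    · have hpascal : m.choose h + m.choose (h + 1) ≤ n.choose (h + 1) := by
        rw [← Nat.choose_succ_succ']
        exact Nat.choose_le_choose _ hlt
      have := le_green_add_choose hr
      omega

end BinomialRepresentation

section Monomials

variable {σ : Type*} [DecidableEq σ] {j l : σ} {h : ℕ} {m : σ → ℕ} {s : Finset σ}
  {M N : Finset (σ → ℕ)}

theorem exists_add_single_eq (hm : m l ≠ 0) : ∃ u : σ → ℕ, u + Pi.single l 1 = m := by
  refine ⟨m - Pi.single l 1, tsub_add_cancel_of_le fun i => ?_⟩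
  rcases eq_or_ne i l with rfl | hi
  · simpa using Nat.one_le_iff_ne_zero.2 hm
  · simp [hi]

theorem add_single_mem_piAntidiag :
    m + Pi.single l 1 ∈ s.piAntidiag (h + 1) ↔ m ∈ s.piAntidiag h ∧ l ∈ s := by
  simp only [Finset.mem_piAntidiag, Pi.add_apply]
  constructor
  · rintro ⟨hsum, hsupp⟩
    have hl : l ∈ s := hsupp l (by simp)
    simp only [Finset.sum_add_distrib, Finset.sum_pi_single', hl, if_true] at hsum
    exact ⟨⟨Nat.succ_injective hsum, fun i hi => hsupp i (by simp [hi])⟩, hl⟩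
  · rintro ⟨⟨hsum, hsupp⟩, hl⟩
    refine ⟨by simp [Finset.sum_add_distrib, hsum, hl], fun i hi => ?_⟩
    rcases eq_or_ne i l with rfl | hil
    · exact hl
    · exact hsupp i (by simpa [hil] using hi)

theorem mem_piAntidiag_succ :
    m ∈ s.piAntidiag (h + 1) ↔ ∃ u ∈ s.piAntidiag h, ∃ l ∈ s, u + Pi.single l 1 = m := by
  constructor
  · intro hm
    obtain ⟨l, -, hl⟩ : ∃ l ∈ s, m l ≠ 0 :=
      Finset.exists_ne_zero_of_sum_ne_zero (by simp [(Finset.mem_piAntidiag.1 hm).1])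
    obtain ⟨u, rfl⟩ := exists_add_single_eq hl
    obtain ⟨hu, hls⟩ := add_single_mem_piAntidiag.1 hm
    exact ⟨u, hu, l, hls, rfl⟩
  · rintro ⟨u, hu, l, hl, rfl⟩
    exact add_single_mem_piAntidiag.2 ⟨hu, hl⟩

/-- The shadow of `M` is contained in `N`: dividing a monomial of `M` by one of its variables gives
a monomial of `N`. Monomials are encoded by their exponent vectors. -/
def ShadowSubset (M N : Finset (σ → ℕ)) : Prop :=
  ∀ ⦃m : σ → ℕ⦄ ⦃l : σ⦄, m + Pi.single l 1 ∈ M → m ∈ N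

/-- The colon `N : x_j`, that is, the set of monomials whose product with the variable `j` lies in
`N`. A homogeneous `N` is stable (replacing any variable by `j` stays in `N`) precisely when
`ShadowSubset N (colon j N)`. -/
noncomputable def colon (j : σ) (N : Finset (σ → ℕ)) : Finset (σ → ℕ) :=
  N.preimage (· + Pi.single j 1) (add_left_injective _).injOn

theorem mem_colon : m ∈ colon j N ↔ m + Pi.single j 1 ∈ N :=
  Finset.mem_preimage

theorem colon_subset_piAntidiag (hN : N ⊆ s.piAntidiag (h + 1)) :
    colon j N ⊆ s.piAntidiag h := fun _ hm =>
  (add_single_mem_piAntidiag.1 (hN (mem_colon.1 hm))).1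

theorem colon_subset_of_shadowSubset (hMN : ShadowSubset M N) : colon j M ⊆ N := fun _ hm =>
  hMN (mem_colon.1 hm)

theorem card_filter_add_card_colon (j : σ) (N : Finset (σ → ℕ)) :
    {m ∈ N | m j = 0}.card + (colon j N).card = N.card := by
  classical
  have hrange : ∀ m : σ → ℕ, m ∈ Set.range (· + Pi.single j 1) ↔ ¬m j = 0 := fun m =>
    ⟨by rintro ⟨u, rfl⟩; simp, exists_add_single_eq⟩
  rw [colon, Finset.card_preimage]
  simp only [hrange]
  exact Finset.card_filter_add_card_filter_not _

theorem filter_subset_piAntidiag (hj : j ∉ s) (hN : N ⊆ (insert j s).piAntidiag h) :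
    {m ∈ N | m j = 0} ⊆ s.piAntidiag h := by
  intro m hm
  obtain ⟨hmN, hmj⟩ := Finset.mem_filter.1 hm
  obtain ⟨hsum, hsupp⟩ := Finset.mem_piAntidiag.1 (hN hmN)
  rw [Finset.sum_insert hj, hmj, zero_add] at hsum
  refine Finset.mem_piAntidiag.2 ⟨hsum, fun l hl => Finset.mem_of_mem_insert_of_ne (hsupp l hl) ?_⟩
  rintro rfl
  exact hl hmj

theorem ShadowSubset.filter (hMN : ShadowSubset M N) :
    ShadowSubset {m ∈ M | m j = 0} {m ∈ N | m j = 0} := by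
  intro m l hm
  obtain ⟨hmM, hmj⟩ := Finset.mem_filter.1 hm
  exact Finset.mem_filter.2 ⟨hMN hmM, (Nat.add_eq_zero_iff.1 hmj).1⟩

end Monomials

section Compression

variable {σ : Type*} [DecidableEq σ] {i j : σ} {m : σ → ℕ} {e n d h : ℕ} {s : Finset σ}
  {M N : Finset (σ → ℕ)}

/-- The monomial with `i`-th exponent `e` on the line through `m` along which variables `i` and `j`
are exchanged. It is meaningful for `e ≤ m i + m j`; beyond that the subtraction truncates. -/
def slide (i j : σ) (m : σ → ℕ) (e : ℕ) : σ → ℕ :=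
  Function.update (Function.update m i e) j (m i + m j - e)

theorem slide_apply_left (hij : i ≠ j) : slide i j m e i = e := by
  simp [slide, hij]

theorem slide_apply_right : slide i j m e j = m i + m j - e := by
  simp [slide]

theorem slide_apply_of_ne {l : σ} (hi : l ≠ i) (hj : l ≠ j) : slide i j m e l = m l := by
  simp [slide, hi, hj]

theorem slide_self : slide i j m (m i) = m := by
  ext l
  simp only [slide, Function.update_apply]
  grind

theorem slide_slide (hij : i ≠ j) (he : e ≤ m i + m j) :
    slide i j (slide i j m e) = slide i j m := by
  ext f l
  simp only [slide, Function.update_apply]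
  grind

theorem slide_add_single_left (hij : i ≠ j) (he : e ≤ m i + m j) :
    slide i j (m + Pi.single i 1) e = slide i j m e + Pi.single j 1 := by
  ext l
  simp only [slide, Function.update_apply, Pi.add_apply, Pi.single_apply]
  grind

theorem slide_add_single_left_succ (hij : i ≠ j) :
    slide i j (m + Pi.single i 1) (e + 1) = slide i j m e + Pi.single i 1 := by
  ext l
  simp only [slide, Function.update_apply, Pi.add_apply, Pi.single_apply]
  grind

theorem slide_add_single_comm :
    slide i j (m + Pi.single i 1) = slide i j (m + Pi.single j 1) := by
  ext e l
  simp only [slide, Function.update_apply, Pi.add_apply, Pi.single_apply]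
  grind

theorem slide_add_single_of_ne {l : σ} (hi : l ≠ i) (hj : l ≠ j) :
    slide i j (m + Pi.single l 1) e = slide i j m e + Pi.single l 1 := by
  ext k
  simp only [slide, Function.update_apply, Pi.add_apply, Pi.single_apply]
  grind

theorem add_le_of_mem_piAntidiag (hij : i ≠ j) (hi : i ∈ s) (hj : j ∈ s)
    (hm : m ∈ s.piAntidiag d) : m i + m j ≤ d := by
  rw [← (Finset.mem_piAntidiag.1 hm).1, ← Finset.sum_pair hij]
  exact Finset.sum_le_sum_of_subset (by simp [Finset.insert_subset_iff, hi, hj])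

theorem sum_slide (hij : i ≠ j) (hi : i ∈ s) (hj : j ∈ s) (m : σ → ℕ) (e : ℕ) :
    ∑ l ∈ s, slide i j m e l = m i + m j - e + (e + ∑ l ∈ (s \ {j}) \ {i}, m l) := by
  have hi' : i ∈ s \ {j} := by simp [hi, hij]
  simp only [slide, Finset.sum_update_of_mem hj, Finset.sum_update_of_mem hi']

theorem slide_mem_piAntidiag (hij : i ≠ j) (hi : i ∈ s) (hj : j ∈ s) (he : e ≤ m i + m j)
    (hm : m ∈ s.piAntidiag d) : slide i j m e ∈ s.piAntidiag d := by
  obtain ⟨hsum, hsupp⟩ := Finset.mem_piAntidiag.1 hm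
  refine Finset.mem_piAntidiag.2 ⟨?_, fun l hl => ?_⟩
  · rw [sum_slide hij hi hj, ← hsum, ← congrArg s.sum (slide_self), sum_slide hij hi hj]
    omega
  · by_contra hls
    refine hl ((slide_apply_of_ne ?_ ?_).trans (not_imp_comm.1 (hsupp l) hls)) <;>
      (rintro rfl; contradiction)

/-- The number of elements of `N` on the `i`-`j`-line through `m` with `i`-th exponent below `n`. -/
noncomputable def lineCount (i j : σ) (N : Finset (σ → ℕ)) (m : σ → ℕ) (n : ℕ) : ℕ :=
  open Classical in Nat.count (fun e => slide i j m e ∈ N) n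

/-- The compression of `N` from `i` to `j`: on each `i`-`j`-line, the elements of `N` are replaced
by equally many monomials with the smallest possible `i`-th exponents, preserving their order. -/
noncomputable def compress (i j : σ) (N : Finset (σ → ℕ)) : Finset (σ → ℕ) :=
  open Classical in N.image fun m => slide i j m (lineCount i j N m (m i))

theorem lineCount_le : lineCount i j N m n ≤ n := by
  classical
  exact Nat.count_le _

theorem lineCount_le_add : lineCount i j N m (m i) ≤ m i + m j :=
  lineCount_le.trans (Nat.le_add_right _ _)

theorem lineCount_slide (hij : i ≠ j) (he : e ≤ m i + m j) :
    lineCount i j N (slide i j m e) = lineCount i j N m := by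
  ext n
  rw [lineCount, slide_slide hij he, lineCount]

theorem lineCount_lt_lineCount {k : ℕ} (hk : slide i j m k ∈ N) (hkn : k < n) :
    lineCount i j N m k < lineCount i j N m n := by
  classical
  exact Nat.count_strict_mono (p := fun e => slide i j m e ∈ N) hk hkn

theorem exists_lineCount_eq {k : ℕ} (hk : k < lineCount i j N m n) :
    ∃ e < n, slide i j m e ∈ N ∧ lineCount i j N m e = k := by
  classical
  have hcard (hf : (Set.ofPred fun e => slide i j m e ∈ N).Finite) : k < hf.toFinset.card :=
    hk.trans_le (Nat.count_le_card hf _)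
  exact ⟨_, Nat.nth_lt_of_lt_count hk, Nat.nth_mem k hcard, Nat.count_nth hcard⟩

theorem mem_compress (hij : i ≠ j) :
    m ∈ compress i j N ↔ m i < lineCount i j N m (m i + m j + 1) := by
  simp only [compress, Finset.mem_image]
  constructor
  · rintro ⟨u, hu, rfl⟩
    have hle : lineCount i j N u (u i) ≤ u i + u j := lineCount_le_add
    rw [lineCount_slide hij hle, slide_apply_left hij, slide_apply_right, Nat.add_sub_cancel' hle]
    exact lineCount_lt_lineCount (by rwa [slide_self]) (by omega)
  · intro hm
    obtain ⟨e, he, heN, hrank⟩ := exists_lineCount_eq hm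
    have hle : e ≤ m i + m j := Nat.le_of_lt_succ he
    refine ⟨slide i j m e, heN, ?_⟩
    rw [lineCount_slide hij hle, slide_apply_left hij, hrank, slide_slide hij hle, slide_self]

theorem injOn_slide_lineCount (hij : i ≠ j) :
    Set.InjOn (fun m => slide i j m (lineCount i j N m (m i))) (N : Set (σ → ℕ)) := by
  classical
  intro m hm u hu hmu
  dsimp only at hmu
  have hline : slide i j m = slide i j u := by
    rw [← slide_slide hij lineCount_le_add (m := m), hmu, slide_slide hij lineCount_le_add]
  have hrank : lineCount i j N m (m i) = lineCount i j N u (u i) := by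
    simpa only [slide_apply_left hij] using congrFun hmu i
  have hexp : m i = u i := by
    rw [lineCount, lineCount, hline] at hrank
    refine Nat.count_injective ?_ ?_ hrank
    · rwa [← hline, slide_self]
    · rwa [slide_self]
  rw [← slide_self (m := m), hline, hexp, slide_self]

theorem card_compress (hij : i ≠ j) : (compress i j N).card = N.card := by
  classical
  exact Finset.card_image_of_injOn (injOn_slide_lineCount hij)

theorem compress_subset_piAntidiag (hij : i ≠ j) (hi : i ∈ s) (hj : j ∈ s)
    (hN : N ⊆ s.piAntidiag d) : compress i j N ⊆ s.piAntidiag d := by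
  classical
  exact Finset.image_subset_iff.2 fun _ hm =>
    slide_mem_piAntidiag hij hi hj lineCount_le_add (hN hm)

-- Macaulay's theorem in two variables: cut `p` at a gap `g` of `q` and shift the part above down.
theorem min_count_succ_le_count {p q : ℕ → Prop} [DecidablePred p] [DecidablePred q]
    (hpq : ∀ e < n, p e → q e) (hpq_succ : ∀ e < n, p (e + 1) → q e) :
    min (Nat.count p (n + 1)) n ≤ Nat.count q n := by
  by_cases hall : ∀ e < n, q e
  · rw [Nat.count_iff_forall.2 hall]
    exact min_le_right _ _
  push Not at hall
  obtain ⟨g, hg, hqg⟩ := hall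
  obtain ⟨c, rfl⟩ := Nat.exists_eq_add_of_le hg.le
  calc min (Nat.count p (g + c + 1)) (g + c)
      ≤ Nat.count p (g + 1 + c) := by
        rw [Nat.add_right_comm]
        exact min_le_left _ _
    _ = Nat.count p g + Nat.count (fun e => p (g + 1 + e)) c := by
        rw [Nat.count_add, Nat.count_succ, if_neg (mt (hpq g hg) hqg), add_zero]
    _ ≤ Nat.count q g + Nat.count (fun e => q (g + e)) c :=
        Nat.add_le_add (Nat.count_mono_left fun e he => hpq e (by omega))
          (Nat.count_mono_left fun e he hp =>
            hpq_succ (g + e) (by omega) (by rwa [Nat.add_right_comm] at hp))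
    _ = Nat.count q (g + c) := (Nat.count_add q g c).symm

theorem ShadowSubset.min_lineCount_le_lineCount (hMN : ShadowSubset M N) (hij : i ≠ j)
    (m : σ → ℕ) :
    min (lineCount i j M (m + Pi.single i 1) (m i + m j + 2)) (m i + m j + 1) ≤
      lineCount i j N m (m i + m j + 1) := by
  classical
  refine min_count_succ_le_count (fun e he hM => hMN (l := j) ?_) (fun e _ hM => hMN (l := i) ?_)
  · rwa [← slide_add_single_left hij (Nat.le_of_lt_succ he)]
  · rwa [← slide_add_single_left_succ hij]

theorem ShadowSubset.compress (hMN : ShadowSubset M N) (hij : i ≠ j) :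
    ShadowSubset (compress i j M) (compress i j N) := by
  classical
  intro m l hm
  rw [mem_compress hij] at hm ⊢
  have hline := hMN.min_lineCount_le_lineCount hij m
  rcases eq_or_ne l i with rfl | hi
  · simp only [Pi.add_apply, Pi.single_eq_same, Pi.single_eq_of_ne hij.symm, add_zero] at hm
    rw [show m l + 1 + m j + 1 = m l + m j + 2 by omega] at hm
    omega
  rcases eq_or_ne l j with rfl | hj
  · simp only [Pi.add_apply, Pi.single_eq_same, Pi.single_eq_of_ne hij, add_zero] at hm
    rw [lineCount, ← slide_add_single_comm, ← lineCount,
      show m i + (m l + 1) + 1 = m i + m l + 2 by omega] at hm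
    omega
  · simp only [Pi.add_apply, Pi.single_eq_of_ne hi.symm, Pi.single_eq_of_ne hj.symm, add_zero] at hm
    refine hm.trans_le (Nat.count_mono_left fun e _ he => hMN (l := l) ?_)
    rwa [← slide_add_single_of_ne hi hj]

theorem sum_compress_lt_sum (hij : i ≠ j) (hi : i ∈ s) (hj : j ∈ s) (hN : N ⊆ s.piAntidiag d)
    (hm : m + Pi.single i 1 ∈ N) (hm' : m + Pi.single j 1 ∉ N) :
    ∑ u ∈ compress i j N, (d - u j) < ∑ u ∈ N, (d - u j) := by
  classical
  rw [compress, Finset.sum_image (injOn_slide_lineCount hij)]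
  simp only [slide_apply_right]
  refine Finset.sum_lt_sum (fun u _ => ?_) ⟨_, hm, ?_⟩
  · have : lineCount i j N u (u i) ≤ u i := lineCount_le
    omega
  · set u := m + Pi.single i 1 with hu
    have hdeg : u i + u j ≤ d := add_le_of_mem_piAntidiag hij hi hj (hN hm)
    have hlt : lineCount i j N u (u i) < u i := by
      refine lineCount_le.lt_of_ne fun heq => hm' ?_
      have hmem : slide i j u (m i) ∈ N := Nat.count_iff_forall.1 heq (m i) (by simp [hu])
      rwa [hu, slide_add_single_left hij (Nat.le_add_right _ _), slide_self] at hmem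
    omega

theorem exists_shadowSubset_colon (hj : j ∈ s) (hM : M ⊆ s.piAntidiag (h + 1))
    (hN : N ⊆ s.piAntidiag h) (hMN : ShadowSubset M N) :
    ∃ M' N' : Finset (σ → ℕ), M'.card = M.card ∧ N'.card = N.card ∧
      M' ⊆ s.piAntidiag (h + 1) ∧ N' ⊆ s.piAntidiag h ∧
      ShadowSubset M' N' ∧ ShadowSubset N' (colon j N') := by
  induction hw : ∑ u ∈ N, (h - u j) using Nat.strong_induction_on generalizing M N with
  | _ w ih =>
    by_cases hst : ShadowSubset N (colon j N)
    · exact ⟨M, N, rfl, rfl, hM, hN, hMN, hst⟩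
    simp only [ShadowSubset, mem_colon] at hst
    push Not at hst
    obtain ⟨m, i, hm, hm'⟩ := hst
    have hij : i ≠ j := by
      rintro rfl
      exact hm' hm
    have hi : i ∈ s := (Finset.mem_piAntidiag.1 (hN hm)).2 i (by simp)
    obtain ⟨M', N', hcardM, hcardN, hrest⟩ :=
      ih _ (hw ▸ sum_compress_lt_sum hij hi hj hN hm hm') (compress_subset_piAntidiag hij hi hj hM)
        (compress_subset_piAntidiag hij hi hj hN) (hMN.compress hij) rfl
    exact ⟨M', N', hcardM.trans (card_compress hij), hcardN.trans (card_compress hij), hrest⟩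

end Compression

section Macaulay

variable {σ : Type*} [DecidableEq σ] {j : σ} {h : ℕ} {s : Finset σ} {M N : Finset (σ → ℕ)}

theorem card_filter_le_green_one (hN : N ⊆ s.piAntidiag 1) (hst : ShadowSubset N (colon j N)) :
    {m ∈ N | m j = 0}.card ≤ green 1 N.card := by
  rw [green_one, ← card_filter_add_card_colon j N]
  rcases N.eq_empty_or_nonempty with rfl | ⟨m, hm⟩
  · simp
  · obtain ⟨u, -, l, -, rfl⟩ := mem_piAntidiag_succ.1 (hN hm)
    have : 0 < (colon j N).card := Finset.card_pos.2 ⟨u, hst hm⟩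
    omega

theorem card_filter_le_green_of_card_le_macaulay (hN : N.card ≤ macaulay h (colon j N).card) :
    {m ∈ N | m j = 0}.card ≤ green (h + 1) N.card := by
  have := card_filter_add_card_colon j N
  have := le_add_green_of_le_macaulay hN
  omega

theorem card_le_macaulay_of_card_filter_le (hMN : ShadowSubset M N)
    (hM : {m ∈ M | m j = 0}.card ≤ macaulay (h + 1) {m ∈ N | m j = 0}.card)
    (hN : {m ∈ N | m j = 0}.card ≤ green (h + 1) N.card) :
    M.card ≤ macaulay (h + 1) N.card :=
  calc M.card = {m ∈ M | m j = 0}.card + (colon j M).card := (card_filter_add_card_colon j M).symm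
    _ ≤ macaulay (h + 1) (green (h + 1) N.card) + N.card :=
      Nat.add_le_add (hM.trans (macaulay_mono _ hN))
        (Finset.card_le_card (colon_subset_of_shadowSubset hMN))
    _ = macaulay (h + 1) N.card := macaulay_green_add h _

theorem card_le_macaulay_of_green
    (hgreen : ∀ {s : Finset σ} {j : σ} {N : Finset (σ → ℕ)}, N ⊆ s.piAntidiag (h + 1) →
      ShadowSubset N (colon j N) → {m ∈ N | m j = 0}.card ≤ green (h + 1) N.card)
    (hM : M ⊆ s.piAntidiag (h + 2)) (hN : N ⊆ s.piAntidiag (h + 1)) (hMN : ShadowSubset M N) :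
    M.card ≤ macaulay (h + 1) N.card := by
  induction s using Finset.induction_on generalizing M N with
  | empty => simp_all
  | insert j s hj ih =>
    obtain ⟨M', N', hcardM, hcardN, hM', hN', hMN', hst⟩ :=
      exists_shadowSubset_colon (Finset.mem_insert_self j s) hM hN hMN
    rw [← hcardM, ← hcardN]
    exact card_le_macaulay_of_card_filter_le hMN'
      (ih (filter_subset_piAntidiag hj hM') (filter_subset_piAntidiag hj hN') hMN'.filter)
      (hgreen hN' hst)

theorem ShadowSubset.card_le_macaulay (hM : M ⊆ s.piAntidiag (h + 2))
    (hN : N ⊆ s.piAntidiag (h + 1)) (hMN : ShadowSubset M N) :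
    M.card ≤ macaulay (h + 1) N.card := by
  induction h generalizing s M N with
  | zero => exact card_le_macaulay_of_green card_filter_le_green_one hM hN hMN
  | succ h ih =>
    exact card_le_macaulay_of_green (fun hN hst => card_filter_le_green_of_card_le_macaulay
      (ih hN (colon_subset_piAntidiag hN) hst)) hM hN hMN

end Macaulay

section LeastRepresentatives

variable {σ Γ : Type*} [LinearOrder σ] [WellFoundedLT σ] [AddCommMonoid Γ] {φ : (σ → ℕ) →+ Γ}
  {s : Finset σ} {h : ℕ} {m : σ → ℕ}

/-- The lexicographically least representatives of the values of `φ` in degree `h`, that is, the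
standard monomials of the congruence that `φ` defines on monomials. -/
noncomputable def leastReps (φ : (σ → ℕ) →+ Γ) (s : Finset σ) (h : ℕ) : Finset (σ → ℕ) :=
  open Classical in {m ∈ s.piAntidiag h | ∀ u ∈ s.piAntidiag h, φ u = φ m → toLex m ≤ toLex u}

theorem mem_leastReps : m ∈ leastReps φ s h ↔
    m ∈ s.piAntidiag h ∧ ∀ u ∈ s.piAntidiag h, φ u = φ m → toLex m ≤ toLex u := by
  simp only [leastReps, Finset.mem_filter]

theorem leastReps_subset : leastReps φ s h ⊆ s.piAntidiag h := fun _ hm => (mem_leastReps.1 hm).1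

theorem shadowSubset_leastReps : ShadowSubset (leastReps φ s (h + 1)) (leastReps φ s h) := by
  intro m l hm
  obtain ⟨hms, hmin⟩ := mem_leastReps.1 hm
  obtain ⟨hm', hl⟩ := add_single_mem_piAntidiag.1 hms
  refine mem_leastReps.2 ⟨hm', fun u hu hum => ?_⟩
  have hle := hmin _ (add_single_mem_piAntidiag.2 ⟨hu, hl⟩) (by rw [map_add, map_add, hum])
  rw [toLex_add, toLex_add] at hle
  exact le_of_add_le_add_right hle

theorem injOn_leastReps : Set.InjOn φ (leastReps φ s h) := by
  intro m hm u hu hmu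
  obtain ⟨hms, hm_min⟩ := mem_leastReps.1 hm
  obtain ⟨hus, hu_min⟩ := mem_leastReps.1 hu
  exact toLex.injective ((hm_min u hus hmu.symm).antisymm (hu_min m hms hmu))

theorem image_leastReps : φ '' leastReps φ s h = φ '' s.piAntidiag h := by
  classical
  refine (Set.image_mono (Finset.coe_subset.2 leastReps_subset)).antisymm ?_
  rintro _ ⟨m, hm, rfl⟩
  obtain ⟨u, hu, hmin⟩ := Finset.exists_min_image {u ∈ s.piAntidiag h | φ u = φ m} toLex
    ⟨m, Finset.mem_filter.2 ⟨hm, rfl⟩⟩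
  obtain ⟨hus, hum⟩ := Finset.mem_filter.1 hu
  refine ⟨u, mem_leastReps.2 ⟨hus, fun v hv hvu => ?_⟩, hum⟩
  exact hmin v (Finset.mem_filter.2 ⟨hv, hvu.trans hum⟩)

theorem card_leastReps : (leastReps φ s h).card = (φ '' s.piAntidiag h).ncard := by
  rw [← image_leastReps, injOn_leastReps.ncard_image, Set.ncard_coe_finset]

theorem ncard_image_piAntidiag_le_macaulay (φ : (σ → ℕ) →+ Γ) (s : Finset σ) (h : ℕ) :
    (φ '' s.piAntidiag (h + 2)).ncard ≤ macaulay (h + 1) (φ '' s.piAntidiag (h + 1)).ncard := by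
  rw [← card_leastReps, ← card_leastReps]
  exact shadowSubset_leastReps.card_le_macaulay leastReps_subset leastReps_subset

end LeastRepresentatives

section Sumset

theorem coe_piAntidiag_succ {σ : Type*} [DecidableEq σ] (s : Finset σ) (h : ℕ) :
    (s.piAntidiag (h + 1) : Set (σ → ℕ)) =
      (s.piAntidiag h : Set (σ → ℕ)) + (fun l => Pi.single l 1) '' (s : Set σ) := by
  ext m
  simp [mem_piAntidiag_succ, Set.mem_add, -Finset.mem_piAntidiag]

theorem coe_image_iterSumset_range {G σ : Type*} [AddCommSemigroup G] [Fintype σ] [DecidableEq σ]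
    (a : σ → G) (h : ℕ) :
    WithZero.coeAddHom '' iterSumset (Set.range a) (h + 1) =
      Fintype.linearCombination ℕ (fun i => (a i : WithZero G)) ''
        (Finset.univ.piAntidiag (h + 1) : Finset (σ → ℕ)) := by
  have hgen : Fintype.linearCombination ℕ (fun i => (a i : WithZero G)) ''
      ((fun l => Pi.single l 1) '' ((Finset.univ : Finset σ) : Set σ)) =
        WithZero.coeAddHom '' Set.range a := by
    ext x
    simp [Fintype.linearCombination_apply_single]
  induction h with
  | zero => rw [coe_piAntidiag_succ, Set.image_add, hgen, iterSumset]; simp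
  | succ h ih =>
    rw [coe_piAntidiag_succ, Set.image_add, hgen, ← ih, iterSumset, Set.image_add]

end Sumset

/-- Let `A` be a nonempty finite subset of an abelian semigroup `(G,+)`. For `h ≥ 1` set
`d_h = |hA|`, and set `d_0 = 1`. Then `d_{h+1} ≤ d_h^⟨h⟩` for all `h ≥ 1`. -/
theorem stmt0 {G : Type*} [AddCommSemigroup G] (A : Set G) (hfin : A.Finite)
    (hne : A.Nonempty) (d : ℕ → ℕ) (hd0 : d 0 = 1)
    (hd : ∀ h : ℕ, 1 ≤ h → d h = Nat.card (iterSumset A h)) :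
    ∀ h : ℕ, 1 ≤ h → d (h + 1) ≤ macaulay h (d h) := by
  intro h hh
  obtain ⟨k, rfl⟩ := Nat.exists_eq_add_of_le' hh
  obtain ⟨n, a, -, rfl⟩ := hfin.fin_param
  let φ := (Fintype.linearCombination ℕ fun i => (a i : WithZero G)).toAddMonoidHom
  have hcard (h : ℕ) :
      d (h + 1) = (φ '' (Finset.univ.piAntidiag (h + 1) : Finset (Fin n → ℕ))).ncard := by
    rw [hd _ (Nat.le_add_left 1 h), Nat.card_coe_set_eq,
      ← Set.ncard_image_of_injective _ WithZero.coe_injective]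
    exact congrArg Set.ncard (coe_image_iterSumset_range a h)
  rw [hcard, hcard]
  exact ncard_image_piAntidiag_le_macaulay φ Finset.univ k
end

section
/- Let G = ℕ^n and B = {e_1,...,e_n} ⊂ G, where e_i is the i-th canonical basis vector. For all h ≥ 1 and all subsets A ⊆ hB (the set of elements of ℕ^n with coordinate sum h), we have |A + B| ≥ |A^lex + B|, where A^lex ⊆ hB is the unique initial segment of hB of cardinality |A| with respect to the lexicographic order on ℕ^n in which earlier coordinates dominate. -/
open scoped Pointwise

/-- The lexicographic order on vectors of `ℕ^n` in which earlier coordinates dominate: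
`vlexLe v u` means `v ≤ u`, i.e. `v = u` or, at the first coordinate where `v, u`
differ, `v` is smaller. -/
def vlexLe {n : ℕ} (v u : Fin n → ℕ) : Prop :=
  v = u ∨ ∃ j : Fin n, v j < u j ∧ ∀ k, k < j → v k = u k

/-!
The proof is by compression and induction on `n`. Fixing the `i`-th coordinate to be `k` cuts out
of `A + B` the union of the `k`-th slice of `A`, enlarged by `B` in dimension `n - 1`, and the
`(k - 1)`-st slice of `A`. If every slice is replaced by the lexicographic segment of the same size,
then, by induction, each of the two sets does not grow; since lexicographic segments of one degree
are nested, `|A + B|` does not grow either. Each nontrivial replacement moves `A` up in a linear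
order, so one may pass to a set `C` all of whose slices in all directions are lexicographic
segments.

Such a `C` need not be a lexicographic segment. However, `C + e_n` consists of vectors of `C + B`
with nonzero last coordinate, so `|C + B| ≥ |C| + |C₀ + B'|`, where `C₀` is the slice of `C` with
last coordinate zero and `B'` is the canonical basis in dimension `n - 1`; for a lexicographic
segment `L` this is an equality. For `n ≥ 3`, the compression of `C` in the first and the last
direction gives `|L₀| ≤ |C₀|` when `|L| ≤ |C|`, and the induction hypothesis applies to `L₀` and
`C₀`.
-/

namespace Macaulay

open Finset

lemma exists_upper_subset_card_eq {α β : Type*} [LinearOrder α] {f : β → α}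
    (hf : Function.Injective f) {X : Finset β} {m : ℕ} (hm : m ≤ #X) :
    ∃ T ⊆ X, #T = m ∧ ∀ u ∈ T, ∀ v ∈ X, f u ≤ f v → v ∈ T := by
  classical
  induction m with
  | zero => exact ⟨∅, empty_subset X, rfl, by simp⟩
  | succ m ih =>
    obtain ⟨T, hTX, hcard, hT⟩ := ih (by omega)
    have hne : (X \ T).Nonempty := by
      rw [← card_pos, card_sdiff_of_subset hTX]
      omega
    obtain ⟨x, hx, hmax⟩ := exists_max_image (X \ T) f hne
    rw [mem_sdiff] at hx
    refine ⟨insert x T, insert_subset hx.1 hTX, by rw [card_insert_of_notMem hx.2, hcard],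
      fun u hu v hv huv => ?_⟩
    by_contra! hvT
    rw [mem_insert, not_or] at hvT
    have hvx : f v ≤ f x := hmax v (mem_sdiff.2 ⟨hv, hvT.2⟩)
    rcases mem_insert.1 hu with rfl | hu
    · exact hvT.1 (hf (hvx.antisymm huv))
    · exact hvT.2 (hT u hu v hv huv)

lemma toLex_lt_iff {ι α : Type*} [LT ι] [LT α] {u v : ι → α} :
    toLex u < toLex v ↔ ∃ j, (∀ k < j, u k = v k) ∧ u j < v j :=
  Iff.rfl

lemma exists_add_single_eq {ι : Type*} [DecidableEq ι] {w : ι → ℕ} {i : ι}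
    (hi : w i ≠ 0) : ∃ u : ι → ℕ, u + Pi.single i 1 = w :=
  ⟨w - Pi.single i 1, tsub_add_cancel_of_le fun k => by
    rcases eq_or_ne k i with rfl | hk
    · simpa [Nat.one_le_iff_ne_zero] using hi
    · simp [hk]⟩

lemma exists_add_single_eq_of_ne_zero {ι : Type*} [LinearOrder ι] [Finite ι] {w : ι → ℕ}
    (hw : w ≠ 0) : ∃ (u : ι → ℕ) (i : ι), u + Pi.single i 1 = w ∧ ∀ l, i < l → u l = 0 := by
  obtain ⟨i, hi, hmax⟩ := wellFounded_gt.has_min {i | w i ≠ 0} (Function.ne_iff.1 hw)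
  obtain ⟨u, rfl⟩ := exists_add_single_eq hi
  refine ⟨u, i, rfl, fun l hl => ?_⟩
  by_contra hul
  exact hmax l (by simp [hul]) hl

section Segments

variable {ι : Type*} [Fintype ι] {A S T L : Finset (ι → ℕ)} {h : ℕ}

/-- All vectors of `A` have degree (coordinate sum) `h`, i.e. `A ⊆ hB`. -/
def IsHomogeneous (A : Finset (ι → ℕ)) (h : ℕ) : Prop :=
  ∀ ⦃u⦄, u ∈ A → ∑ j, u j = h

lemma eq_of_sum_eq [Subsingleton ι] {u v : ι → ℕ} (huv : ∑ j, u j = ∑ j, v j) : u = v := by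
  ext i
  rwa [Fintype.sum_subsingleton _ i, Fintype.sum_subsingleton _ i] at huv

section UpShadow

variable [DecidableEq ι]

/-- The sumset `A + {e_1, …, e_n}`, i.e. the set of vectors obtained from a vector of `A` by
increasing one coordinate by one. -/
def upShadow (A : Finset (ι → ℕ)) : Finset (ι → ℕ) :=
  A + univ.image fun j => (Pi.single j 1 : ι → ℕ)

lemma mem_upShadow {w : ι → ℕ} : w ∈ upShadow A ↔ ∃ u ∈ A, ∃ j, u + Pi.single j 1 = w := by
  simp [upShadow, mem_add]

lemma add_single_mem_upShadow {u : ι → ℕ} (hu : u ∈ A) (j : ι) :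
    u + Pi.single j 1 ∈ upShadow A :=
  mem_upShadow.2 ⟨u, hu, j, rfl⟩

lemma image_add_single_subset_upShadow (A : Finset (ι → ℕ)) (i : ι) :
    A.image (· + Pi.single i 1) ⊆ upShadow A :=
  image_subset_iff.2 fun _ hu => add_single_mem_upShadow hu i

lemma upShadow_mono (hST : S ⊆ T) : upShadow S ⊆ upShadow T :=
  add_subset_add_right hST

lemma upShadow_empty : upShadow (∅ : Finset (ι → ℕ)) = ∅ :=
  empty_add _

lemma sum_add_single (u : ι → ℕ) (i : ι) :
    ∑ j, (u + Pi.single i 1 : ι → ℕ) j = ∑ j, u j + 1 := by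
  simp [sum_add_distrib]

protected lemma IsHomogeneous.upShadow (hA : IsHomogeneous A h) :
    IsHomogeneous (upShadow A) (h + 1) := by
  intro w hw
  obtain ⟨u, hu, j, rfl⟩ := mem_upShadow.1 hw
  rw [sum_add_single, hA hu]

lemma card_lt_card_upShadow [Nontrivial ι] (hA : A.Nonempty) : #A < #(upShadow A) := by
  obtain ⟨i, j, hij⟩ := exists_pair_ne ι
  obtain ⟨m, hm, hmax⟩ := exists_max_image A (· i) hA
  rw [← card_image_of_injective A (add_left_injective (Pi.single j 1))]
  refine card_lt_card ((ssubset_iff_of_subset (image_add_single_subset_upShadow A j)).2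
    ⟨_, add_single_mem_upShadow hm i, fun hmem => ?_⟩)
  obtain ⟨u, hu, heq⟩ := mem_image.1 hmem
  have hui : u i = m i + 1 := by simpa [hij] using congrFun heq i
  have := hmax u hu
  omega

end UpShadow

variable [LinearOrder ι]

/-- `L` is a lexicographic segment: within each degree, it is closed under passing to
lexicographically larger vectors. No degree is fixed, so that slices of lexicographic segments of
different degrees can be treated alike. -/
def IsLexSegment (L : Finset (ι → ℕ)) : Prop :=
  ∀ ⦃u⦄, u ∈ L → ∀ ⦃v⦄, ∑ j, v j = ∑ j, u j → toLex u ≤ toLex v → v ∈ L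

lemma IsLexSegment.subset_or_subset (hS : IsLexSegment S) (hT : IsLexSegment T)
    (hST : ∀ u ∈ S, ∀ v ∈ T, ∑ j, u j = ∑ j, v j) : S ⊆ T ∨ T ⊆ S := by
  by_contra! hcon
  obtain ⟨u, hu, huT⟩ := not_subset.1 hcon.1
  obtain ⟨v, hv, hvS⟩ := not_subset.1 hcon.2
  rcases le_total (toLex u) (toLex v) with huv | hvu
  · exact hvS (hS hu (hST u hu v hv).symm huv)
  · exact huT (hT hv (hST u hu v hv) hvu)

lemma IsLexSegment.card_union_le (hS : IsLexSegment S) (hT : IsLexSegment T)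
    (hST : ∀ u ∈ S, ∀ v ∈ T, ∑ j, u j = ∑ j, v j) : #(S ∪ T) ≤ max #S #T := by
  rcases hS.subset_or_subset hT hST with hsub | hsub
  · simp [union_eq_right.2 hsub]
  · simp [union_eq_left.2 hsub]

lemma exists_isLexSegment_card_eq (hA : IsHomogeneous A h) :
    ∃ L : Finset (ι → ℕ), IsHomogeneous L h ∧ IsLexSegment L ∧ #L = #A := by
  have hsub : A ⊆ univ.piAntidiag h := fun u hu => by simpa using hA hu
  obtain ⟨T, hTX, hcard, hup⟩ := exists_upper_subset_card_eq
    (toLex (α := ι → ℕ)).injective (card_le_card hsub)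
  have hT : IsHomogeneous T h := fun u hu => by simpa using hTX hu
  exact ⟨T, hT, fun u hu v hvu huv => hup u hu v (by simpa [hvu] using hT hu) huv, hcard⟩

lemma toLex_le_of_le_add_single {u v : ι → ℕ} {i : ι} (huv : ∑ j, u j = ∑ j, v j)
    (hi : ∀ l, i < l → v l = 0) (hle : toLex u ≤ toLex (v + Pi.single i 1)) :
    toLex u ≤ toLex v := by
  by_contra! hvu
  obtain ⟨k, heq, hk⟩ := toLex_lt_iff.1 hvu
  have hki : k < i := by
    by_contra! hik
    refine (sum_lt_sum (fun l _ => ?_) ⟨k, mem_univ k, hk⟩).ne' huv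
    rcases lt_trichotomy l k with hl | rfl | hl
    · exact (heq l hl).le
    · exact hk.le
    · simp [hi l (hik.trans_lt hl)]
  refine hle.not_gt ⟨k, fun l hl => ?_, ?_⟩
  · simpa [(hl.trans hki).ne] using heq l hl
  · simpa [hki.ne] using hk

lemma IsLexSegment.mem_of_le_add_single (hL : IsLexSegment L) {u v : ι → ℕ} {i : ι} (hu : u ∈ L)
    (huv : ∑ j, u j = ∑ j, v j) (hi : ∀ l, i < l → v l = 0)
    (hle : toLex u ≤ toLex (v + Pi.single i 1)) : v ∈ L :=
  hL hu huv.symm (toLex_le_of_le_add_single huv hi hle)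

protected lemma IsLexSegment.upShadow (hL : IsLexSegment L) : IsLexSegment (upShadow L) := by
  intro w hw w' hsum hle
  obtain ⟨u, hu, j, rfl⟩ := mem_upShadow.1 hw
  rw [sum_add_single] at hsum
  have hw' : w' ≠ 0 := by
    rintro rfl
    simp at hsum
  obtain ⟨v, i, rfl, hi⟩ := exists_add_single_eq_of_ne_zero hw'
  rw [sum_add_single, add_left_inj] at hsum
  exact add_single_mem_upShadow
    (hL.mem_of_le_add_single hu hsum.symm hi ((Pi.toLex_monotone le_self_add).trans hle)) i

end Segments

section Slices

variable {n : ℕ} {α : Type*} {i : Fin (n + 1)} {a : α} {A B : Finset (Fin (n + 1) → α)}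

/-- The slice of `A` on which the `i`-th coordinate equals `a`, with that coordinate deleted. -/
noncomputable def slice (i : Fin (n + 1)) (a : α) (A : Finset (Fin (n + 1) → α)) :
    Finset (Fin n → α) :=
  A.preimage (Fin.insertNth (α := fun _ => α) i a)
    (Fin.insertNth_right_injective (α := fun _ => α) a).injOn

lemma mem_slice {w : Fin n → α} : w ∈ slice i a A ↔ i.insertNth a w ∈ A :=
  mem_preimage

lemma removeNth_mem_slice {u : Fin (n + 1) → α} : i.removeNth u ∈ slice i (u i) A ↔ u ∈ A := by
  rw [mem_slice, Fin.insertNth_self_removeNth]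

lemma exists_forall_slice_eq (i : Fin (n + 1)) {T : α → Finset (Fin n → α)}
    (hT : {a | (T a).Nonempty}.Finite) : ∃ A, ∀ a, slice i a A = T a := by
  classical
  refine ⟨hT.toFinset.biUnion fun a => (T a).image (i.insertNth a), fun a => ?_⟩
  ext w
  simpa [mem_slice, Fin.insertNth_inj] using fun hw => ⟨w, hw⟩

lemma card_slice [DecidableEq α] (i : Fin (n + 1)) (a : α) (A : Finset (Fin (n + 1) → α)) :
    #(slice i a A) = #{u ∈ A | u i = a} := by
  rw [← card_image_of_injective (slice i a A)
    (Fin.insertNth_right_injective (α := fun _ => α) (p := i) a)]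
  congr 1
  ext u
  simp only [mem_image, mem_slice, mem_filter]
  constructor
  · rintro ⟨w, hw, rfl⟩
    exact ⟨hw, Fin.insertNth_apply_same (α := fun _ => α) i a w⟩
  · rintro ⟨hu, rfl⟩
    exact ⟨_, mem_slice.1 (removeNth_mem_slice.2 hu), Fin.insertNth_self_removeNth i u⟩

lemma card_le_card_of_card_slice_le (i : Fin (n + 1))
    (hAB : ∀ a, #(slice i a A) ≤ #(slice i a B)) : #A ≤ #B := by
  classical
  simp only [card_slice] at hAB
  have hA : Set.MapsTo (· i) (A : Set (Fin (n + 1) → α)) ((A ∪ B).image (· i)) :=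
    fun u hu => mem_coe.2 (mem_image_of_mem _ (mem_union_left B hu))
  have hB : Set.MapsTo (· i) (B : Set (Fin (n + 1) → α)) ((A ∪ B).image (· i)) :=
    fun u hu => mem_coe.2 (mem_image_of_mem _ (mem_union_right A hu))
  rw [card_eq_sum_card_fiberwise hA, card_eq_sum_card_fiberwise hB]
  exact sum_le_sum fun a _ => hAB a

lemma card_eq_card_of_card_slice_eq (i : Fin (n + 1))
    (hAB : ∀ a, #(slice i a A) = #(slice i a B)) : #A = #B :=
  le_antisymm (card_le_card_of_card_slice_le i fun a => (hAB a).le)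
    (card_le_card_of_card_slice_le i fun a => (hAB a).ge)

end Slices

section LexTuples

variable {n : ℕ} {α : Type*} [LinearOrder α] {u v : Fin (n + 1) → α}

lemma toLex_insertNth_lt_iff {i : Fin (n + 1)} {k : α} {v w : Fin n → α} :
    toLex (i.insertNth k v : Fin (n + 1) → α) < toLex (i.insertNth k w : Fin (n + 1) → α) ↔
      toLex v < toLex w := by
  simp [toLex_lt_iff, Fin.exists_iff_succAbove i, Fin.forall_iff_succAbove i,
    Fin.succAbove_lt_succAbove_iff]

lemma toLex_insertNth_le_iff {i : Fin (n + 1)} {k : α} {v w : Fin n → α} :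
    toLex (i.insertNth k v : Fin (n + 1) → α) ≤ toLex (i.insertNth k w : Fin (n + 1) → α) ↔
      toLex v ≤ toLex w := by
  rw [← not_lt, ← not_lt]
  exact not_congr toLex_insertNth_lt_iff

lemma toLex_lt_of_init_lt (huv : toLex (Fin.init u) < toLex (Fin.init v)) :
    toLex u < toLex v := by
  obtain ⟨j, heq, hj⟩ := toLex_lt_iff.1 huv
  refine ⟨j.castSucc, Fin.lastCases (fun hl => ?_) fun l hl => ?_, hj⟩
  · exact absurd hl (Fin.castSucc_lt_last j).not_gt
  · exact heq l hl

lemma toLex_init_lt_of_lt [AddCommMonoid α] [IsLeftCancelAdd α]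
    (hsum : ∑ j, u j = ∑ j, v j) (huv : toLex u < toLex v) :
    toLex (Fin.init u) < toLex (Fin.init v) := by
  obtain ⟨j, heq, hj⟩ := toLex_lt_iff.1 huv
  induction j using Fin.lastCases with
  | last =>
    rw [Fin.sum_univ_castSucc, Fin.sum_univ_castSucc,
      sum_congr rfl fun l _ => heq _ (Fin.castSucc_lt_last l)] at hsum
    exact absurd (add_left_cancel hsum) hj.ne
  | cast j => exact ⟨j, fun l hl => heq _ (Fin.castSucc_lt_castSucc_iff.2 hl), hj⟩

end LexTuples

section Compression

variable {n h : ℕ} {i : Fin (n + 1)} {A C L : Finset (Fin (n + 1) → ℕ)}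

lemma IsHomogeneous.add_sum_of_mem_slice (hA : IsHomogeneous A h) {k : ℕ} {w : Fin n → ℕ}
    (hw : w ∈ slice i k A) : k + ∑ j, w j = h := by
  simpa using hA (mem_slice.1 hw)

protected lemma IsHomogeneous.slice (hA : IsHomogeneous A h) (i : Fin (n + 1)) (k : ℕ) :
    IsHomogeneous (slice i k A) (h - k) := fun _ hw => by
  have := hA.add_sum_of_mem_slice hw
  omega

protected lemma IsLexSegment.slice (hL : IsLexSegment L) (i : Fin (n + 1)) (k : ℕ) :
    IsLexSegment (slice i k L) := fun _ hu _ hsum huv =>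
  mem_slice.2 (hL (mem_slice.1 hu) (by simp [hsum]) (toLex_insertNth_le_iff.2 huv))

lemma insertNth_add_single_self (i : Fin (n + 1)) (k : ℕ) (w : Fin n → ℕ) :
    (i.insertNth k w + Pi.single i 1 : Fin (n + 1) → ℕ) = i.insertNth (k + 1) w := by
  rw [← Fin.insertNth_zero_right, ← Fin.insertNth_add, add_zero]

lemma insertNth_add_single_succAbove (i : Fin (n + 1)) (k : ℕ) (w : Fin n → ℕ) (l : Fin n) :
    (i.insertNth k w + Pi.single (i.succAbove l) 1 : Fin (n + 1) → ℕ) =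
      i.insertNth k (w + Pi.single l 1) := by
  ext j
  cases j using i.succAboveCases with
  | x => simp [Fin.ne_succAbove]
  | p j => simp [Pi.single_apply]

lemma mem_slice_upShadow {k : ℕ} {w : Fin n → ℕ} : w ∈ slice i k (upShadow A) ↔
    w ∈ upShadow (slice i k A) ∨ ∃ k', k' + 1 = k ∧ w ∈ slice i k' A := by
  simp only [mem_slice, mem_upShadow]
  constructor
  · rintro ⟨u, hu, j, hj⟩
    rw [← Fin.insertNth_self_removeNth i u] at hu hj
    rcases Fin.eq_self_or_eq_succAbove i j with rfl | ⟨l, rfl⟩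
    · rw [insertNth_add_single_self, Fin.insertNth_inj] at hj
      exact .inr ⟨_, hj.1, hj.2 ▸ hu⟩
    · rw [insertNth_add_single_succAbove, Fin.insertNth_inj] at hj
      exact .inl ⟨_, hj.1 ▸ hu, l, hj.2⟩
  · rintro (⟨u, hu, l, rfl⟩ | ⟨k', rfl, hw⟩)
    · exact ⟨_, hu, _, insertNth_add_single_succAbove i k u l⟩
    · exact ⟨_, hw, i, insertNth_add_single_self i k' w⟩

lemma slice_zero_upShadow (i : Fin (n + 1)) (A : Finset (Fin (n + 1) → ℕ)) :
    slice i 0 (upShadow A) = upShadow (slice i 0 A) := by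
  ext w
  simp [mem_slice_upShadow]

lemma slice_succ_upShadow (i : Fin (n + 1)) (k : ℕ) (A : Finset (Fin (n + 1) → ℕ)) :
    slice i (k + 1) (upShadow A) = upShadow (slice i (k + 1) A) ∪ slice i k A := by
  ext w
  simp [mem_slice_upShadow]

lemma card_upShadow_eq_add_card_filter (i : Fin (n + 1)) (A : Finset (Fin (n + 1) → ℕ)) :
    #(upShadow A) = #(upShadow (slice i 0 A)) + #{w ∈ upShadow A | ¬w i = 0} := by
  rw [← slice_zero_upShadow, card_slice, card_filter_add_card_filter_not]

lemma card_add_card_upShadow_slice_le (i : Fin (n + 1)) (A : Finset (Fin (n + 1) → ℕ)) :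
    #A + #(upShadow (slice i 0 A)) ≤ #(upShadow A) := by
  rw [card_upShadow_eq_add_card_filter i A, add_comm,
    ← card_image_of_injective A (add_left_injective (Pi.single i 1))]
  gcongr
  refine fun w hw => mem_filter.2 ⟨image_add_single_subset_upShadow A i hw, ?_⟩
  obtain ⟨u, -, rfl⟩ := mem_image.1 hw
  simp

lemma IsLexSegment.card_upShadow_le (hL : IsLexSegment L) :
    #(upShadow L) ≤ #L + #(upShadow (slice (Fin.last n) 0 L)) := by
  rw [card_upShadow_eq_add_card_filter (Fin.last n) L, add_comm,
    ← card_image_of_injective L (add_left_injective (Pi.single (Fin.last n) 1))]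
  gcongr
  intro w hw
  obtain ⟨hwL, hw⟩ := mem_filter.1 hw
  obtain ⟨v, rfl⟩ := exists_add_single_eq hw
  obtain ⟨u, hu, j, huv⟩ := mem_upShadow.1 hwL
  have hsum : ∑ k, u k = ∑ k, v k := by
    rw [← add_left_inj 1, ← sum_add_single u j, huv, sum_add_single]
  exact mem_image_of_mem _ (hL.mem_of_le_add_single hu hsum
    (fun l hl => absurd hl (Fin.le_last l).not_gt) (huv ▸ Pi.toLex_monotone le_self_add))

/-- In `ℕ^n`, lexicographic segments have the smallest upper shadows: the theorem in dimension
`n`, as it enters the induction on `n`. -/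
def LexMinimizesUpShadow (n : ℕ) : Prop :=
  ∀ ⦃h : ℕ⦄ ⦃A L : Finset (Fin n → ℕ)⦄, IsHomogeneous A h → IsHomogeneous L h → IsLexSegment L →
    #L ≤ #A → #(upShadow L) ≤ #(upShadow A)

lemma lexMinimizesUpShadow_of_subsingleton [Subsingleton (Fin n)] : LexMinimizesUpShadow n := by
  intro h A L hA hLh _ hcard
  refine card_le_card (upShadow_mono fun u hu => ?_)
  obtain ⟨v, hv⟩ := card_pos.1 ((card_pos.2 ⟨u, hu⟩).trans_le hcard)
  rwa [eq_of_sum_eq ((hLh hu).trans (hA hv).symm)]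

lemma lexMinimizesUpShadow_two : LexMinimizesUpShadow 2 := by
  intro h A L _ hLh hL hcard
  rcases L.eq_empty_or_nonempty with rfl | hne
  · simp [upShadow_empty]
  have hle_one : #(upShadow (slice (Fin.last 1) 0 L)) ≤ 1 :=
    have hhom := (hLh.slice (Fin.last 1) 0).upShadow
    card_le_one.2 fun u hu v hv => eq_of_sum_eq ((hhom hu).trans (hhom hv).symm)
  calc #(upShadow L) ≤ #L + #(upShadow (slice (Fin.last 1) 0 L)) := hL.card_upShadow_le
    _ ≤ #A + 1 := add_le_add hcard hle_one
    _ ≤ #(upShadow A) := card_lt_card_upShadow (card_pos.1 (hne.card_pos.trans_le hcard))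

lemma exists_isLexSegment_slice (hA : IsHomogeneous A h) (i : Fin (n + 1)) :
    ∃ C, IsHomogeneous C h ∧
      ∀ k, IsLexSegment (slice i k C) ∧ #(slice i k C) = #(slice i k A) := by
  choose T hTh hT hcard using fun k => exists_isLexSegment_card_eq (hA.slice i k)
  have hle {k : ℕ} (hk : (T k).Nonempty) : k ≤ h := by
    rw [← card_pos, hcard, card_pos] at hk
    obtain ⟨w, hw⟩ := hk
    exact (hA.add_sum_of_mem_slice hw).symm ▸ Nat.le_add_right k _
  obtain ⟨C, hC⟩ := exists_forall_slice_eq i ((Set.finite_Iic h).subset fun _ hk => hle hk)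
  refine ⟨C, fun u hu => ?_, fun k => by simpa only [hC] using ⟨hT k, hcard k⟩⟩
  rw [← removeNth_mem_slice (i := i), hC] at hu
  rw [← Fin.add_sum_removeNth i, hTh _ hu, Nat.add_sub_cancel' (hle ⟨_, hu⟩)]

lemma card_upShadow_le_of_isLexSegment_slice (hn : LexMinimizesUpShadow n)
    (hA : IsHomogeneous A h) (hCh : IsHomogeneous C h) (hC : ∀ k, IsLexSegment (slice i k C))
    (hcard : ∀ k, #(slice i k C) = #(slice i k A)) : #(upShadow C) ≤ #(upShadow A) := by
  have hslice (k : ℕ) : #(upShadow (slice i k C)) ≤ #(upShadow (slice i k A)) :=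
    hn (hA.slice i k) (hCh.slice i k) (hC k) (hcard k).le
  refine card_le_card_of_card_slice_le i fun k => ?_
  cases k with
  | zero => simpa only [slice_zero_upShadow] using hslice 0
  | succ k =>
    have hdeg : ∀ w ∈ upShadow (slice i (k + 1) C), ∀ w' ∈ slice i k C,
        ∑ j, w j = ∑ j, w' j := by
      intro w hw w' hw'
      obtain ⟨u, hu, j, rfl⟩ := mem_upShadow.1 hw
      have := hCh.add_sum_of_mem_slice hu
      have := hCh.add_sum_of_mem_slice hw'
      rw [sum_add_single]
      omega
    simp only [slice_succ_upShadow]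
    calc #(upShadow (slice i (k + 1) C) ∪ slice i k C)
        ≤ max #(upShadow (slice i (k + 1) C)) #(slice i k C) :=
          (hC (k + 1)).upShadow.card_union_le (hC k) hdeg
      _ ≤ max #(upShadow (slice i (k + 1) A)) #(slice i k A) :=
          max_le_max (hslice (k + 1)) (hcard k).le
      _ ≤ #(upShadow (slice i (k + 1) A) ∪ slice i k A) :=
          max_le (card_le_card subset_union_left) (card_le_card subset_union_right)

/-- `A` as a point of the colexicographic order on finite sets of lexicographically ordered vectors:
of two sets, the one containing the largest vector of their symmetric difference is larger.
Replacing slices by lexicographic segments increases this invariant. -/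
def lexColex (A : Finset (Fin n → ℕ)) : Colex (Finset (Lex (Fin n → ℕ))) :=
  toColex (A.map toLex.toEmbedding)

lemma lexColex_lt_lexColex_iff {A C : Finset (Fin n → ℕ)} : lexColex A < lexColex C ↔
    ∃ a ∈ C, a ∉ A ∧ ∀ b ∈ A, b ∉ C → toLex b < toLex a := by
  simp only [lexColex, Finset.Colex.toColex_lt_toColex_iff_exists_forall_lt, mem_map_equiv]
  rfl

lemma lexColex_lt_of_isLexSegment_slice (hA : IsHomogeneous A h) (hCh : IsHomogeneous C h)
    (hC : ∀ k, IsLexSegment (slice i k C)) (hcard : ∀ k, #(slice i k C) = #(slice i k A))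
    (hne : A ≠ C) : lexColex A < lexColex C := by
  have hsdiff : (A \ C).Nonempty := by
    rw [sdiff_nonempty]
    exact fun hAC => hne (eq_of_subset_of_card_le hAC (card_eq_card_of_card_slice_eq i hcard).le)
  obtain ⟨b, hb, hmax⟩ := exists_max_image (A \ C) toLex hsdiff
  rw [mem_sdiff, ← removeNth_mem_slice (i := i), ← removeNth_mem_slice (i := i) (A := C)] at hb
  obtain ⟨w, hw⟩ : (slice i (b i) C \ slice i (b i) A).Nonempty := by
    rw [← card_pos, card_sdiff_comm (hcard _), card_pos]
    exact ⟨_, mem_sdiff.2 hb⟩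
  rw [mem_sdiff] at hw
  have hbw : toLex b < toLex (i.insertNth (b i) w : Fin (n + 1) → ℕ) := by
    refine lt_of_not_ge fun hle => ?_
    conv_rhs at hle => rw [← Fin.insertNth_self_removeNth i b]
    refine hb.2 (hC _ hw.1 ?_ (toLex_insertNth_le_iff.1 hle))
    have := hA.add_sum_of_mem_slice hb.1
    have := hCh.add_sum_of_mem_slice hw.1
    omega
  exact lexColex_lt_lexColex_iff.2 ⟨_, mem_slice.1 hw.1, fun hwA => hw.2 (mem_slice.2 hwA),
    fun c hc hcC => (hmax c (mem_sdiff.2 ⟨hc, hcC⟩)).trans_lt hbw⟩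

lemma exists_forall_isLexSegment_slice (hn : LexMinimizesUpShadow n) (hA : IsHomogeneous A h) :
    ∃ C : Finset (Fin (n + 1) → ℕ), IsHomogeneous C h ∧ #C = #A ∧ #(upShadow C) ≤ #(upShadow A) ∧
      ∀ i k, IsLexSegment (slice i k C) := by
  have hsub {D : Finset (Fin (n + 1) → ℕ)} : D ⊆ univ.piAntidiag h ↔ IsHomogeneous D h := by
    simp [subset_iff, IsHomogeneous]
  obtain ⟨C, hC, hmax⟩ := exists_max_image
    {C ∈ (univ.piAntidiag h).powerset | #C = #A ∧ #(upShadow C) ≤ #(upShadow A)} lexColex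
    ⟨A, by simpa only [mem_filter, mem_powerset, hsub, le_refl, and_true]⟩
  simp only [mem_filter, mem_powerset, hsub] at hC hmax
  obtain ⟨hCh, hCA, hle⟩ := hC
  refine ⟨C, hCh, hCA, hle, fun i => ?_⟩
  obtain ⟨D, hDh, hD⟩ := exists_isLexSegment_slice hCh i
  obtain ⟨hD, hDC⟩ := forall_and.1 hD
  have hDmax : lexColex D ≤ lexColex C := hmax D ⟨hDh,
    (card_eq_card_of_card_slice_eq i hDC).trans hCA,
    (card_upShadow_le_of_isLexSegment_slice hn hCh hDh hD hDC).trans hle⟩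
  have hCD : C = D := by
    by_contra hne
    exact (lexColex_lt_of_isLexSegment_slice hCh hDh hD hDC hne).not_ge hDmax
  rwa [hCD]

end Compression

section Induction

variable {n h : ℕ}

lemma IsLexSegment.mem_of_mem_slice {A : Finset (Fin (n + 1) → ℕ)} {i : Fin (n + 1)}
    {u v : Fin (n + 1) → ℕ} (hA : IsLexSegment (slice i (v i) A)) (hu : u ∈ A) (hi : u i = v i)
    (hsum : ∑ j, v j = ∑ j, u j) (huv : toLex u ≤ toLex v) : v ∈ A := by
  rw [← removeNth_mem_slice (i := i)] at hu ⊢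
  rw [← Fin.add_sum_removeNth i, ← Fin.add_sum_removeNth i u, hi, add_right_inj] at hsum
  refine hA (hi ▸ hu) hsum ((toLex_insertNth_le_iff (i := i) (k := v i)).1 ?_)
  rwa [Fin.insertNth_self_removeNth, ← hi, Fin.insertNth_self_removeNth]

-- With at least three coordinates, moving the last one onto its predecessor leaves the first one
-- alone, so the vector obtained lies in the same slice in direction `0`.
lemma init_add_single_mem_slice {A : Finset (Fin (n + 3) → ℕ)}
    (hA : ∀ k, IsLexSegment (slice 0 k A)) {w : Fin (n + 3) → ℕ} (hw : w ∈ A) :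
    Fin.init w + Pi.single (Fin.last (n + 1)) (w (Fin.last (n + 2))) ∈
      slice (Fin.last (n + 2)) 0 A := by
  set w' := Fin.init w + Pi.single (Fin.last (n + 1)) (w (Fin.last (n + 2))) with hw'
  have hzero : w 0 = (Fin.snoc w' 0 : Fin (n + 3) → ℕ) 0 := by
    rw [← Fin.castSucc_zero, Fin.snoc_castSucc]
    simp [hw', Fin.init, Fin.ext_iff]
  have hsum : ∑ j, (Fin.snoc w' 0 : Fin (n + 3) → ℕ) j = ∑ j, w j := by
    rw [Fin.sum_snoc, Fin.sum_univ_castSucc w]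
    simp [hw', sum_add_distrib, Fin.init]
  have hle : toLex w ≤ toLex (Fin.snoc w' 0 : Fin (n + 3) → ℕ) := by
    refine le_of_not_gt fun hlt => ?_
    have hinit := toLex_init_lt_of_lt hsum hlt
    rw [Fin.init_snoc] at hinit
    exact hinit.not_ge (Pi.toLex_monotone le_self_add)
  rw [mem_slice, Fin.insertNth_last']
  exact (hA _).mem_of_mem_slice hw hzero hsum hle

lemma card_slice_last_le {A L : Finset (Fin (n + 3) → ℕ)} (hA : IsHomogeneous A h)
    (hA_zero : ∀ k, IsLexSegment (slice 0 k A))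
    (hA_last : IsLexSegment (slice (Fin.last (n + 2)) 0 A))
    (hLh : IsHomogeneous L h) (hL : IsLexSegment L) (hcard : #L ≤ #A) :
    #(slice (Fin.last (n + 2)) 0 L) ≤ #(slice (Fin.last (n + 2)) 0 A) := by
  refine card_le_card ?_
  by_contra hsub
  obtain ⟨v, hvL, hvA⟩ := not_subset.1 hsub
  have hAL : A ⊆ L := by
    intro w hw
    have hw' := init_add_single_mem_slice hA_zero hw
    set w' := Fin.init w + Pi.single (Fin.last (n + 1)) (w (Fin.last (n + 2))) with hw'_def
    have hsum : ∑ j, v j = ∑ j, w' j := (hLh.slice _ _ hvL).trans (hA.slice _ _ hw').symm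
    have hlt : toLex v < toLex w' := lt_of_not_ge fun hle => hvA (hA_last hw' hsum hle)
    have hinit : toLex (Fin.init v) < toLex (Fin.init (Fin.init w)) := by
      have hinit_eq : Fin.init w' = Fin.init (Fin.init w) := by
        ext j
        simp [hw'_def, Fin.init]
      exact hinit_eq ▸ toLex_init_lt_of_lt hsum hlt
    rw [mem_slice, Fin.insertNth_last'] at hvL
    refine hL hvL ((hA hw).trans (hLh hvL).symm) (toLex_lt_of_init_lt ?_).le
    rw [Fin.init_snoc]
    exact toLex_lt_of_init_lt hinit
  rw [mem_slice] at hvL hvA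
  exact hvA ((eq_of_subset_of_card_le hAL hcard) ▸ hvL)

lemma LexMinimizesUpShadow.succ (hn : LexMinimizesUpShadow (n + 2)) :
    LexMinimizesUpShadow (n + 3) := by
  intro h A L hA hLh hL hcard
  obtain ⟨C, hCh, hCA, hle, hC⟩ := exists_forall_isLexSegment_slice hn hA
  have hslice : #(slice (Fin.last (n + 2)) 0 L) ≤ #(slice (Fin.last (n + 2)) 0 C) :=
    card_slice_last_le hCh (hC 0) (hC _ 0) hLh hL (hcard.trans hCA.ge)
  calc #(upShadow L) ≤ #L + #(upShadow (slice (Fin.last (n + 2)) 0 L)) := hL.card_upShadow_le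
    _ ≤ #C + #(upShadow (slice (Fin.last (n + 2)) 0 C)) :=
      add_le_add (hcard.trans hCA.ge) (hn (hCh.slice _ _) (hLh.slice _ _) (hL.slice _ _) hslice)
    _ ≤ #(upShadow C) := card_add_card_upShadow_slice_le _ C
    _ ≤ #(upShadow A) := hle

lemma lexMinimizesUpShadow : ∀ n, LexMinimizesUpShadow n
  | 0 | 1 => lexMinimizesUpShadow_of_subsingleton
  | 2 => lexMinimizesUpShadow_two
  | n + 3 => (lexMinimizesUpShadow (n + 2)).succ

lemma vlexLe_iff {u v : Fin n → ℕ} : vlexLe v u ↔ toLex v ≤ toLex u := by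
  rw [le_iff_eq_or_lt, toLex_inj, vlexLe]
  refine or_congr_right (Iff.trans ?_ toLex_lt_iff.symm)
  simp only [and_comm]

end Induction

end Macaulay

/-- Additive version of Macaulay's theorem. Let `G = ℕ^n` and `B = {e_1,…,e_n} ⊂ G`,
the canonical basis vectors. For all `h ≥ 1` and all subsets `A ⊆ hB` (vectors of
coordinate sum `h`), we have `|A + B| ≥ |A^lex + B|`, where `A^lex ⊆ hB` is the
initial segment `{u ∈ hB : u ≥ v}` (for suitable `v ∈ hB`) of cardinality `|A|`
with respect to the lexicographic order. -/
theorem stmt6 (n h : ℕ) (hh : 1 ≤ h) (A Alex : Finset (Fin n → ℕ))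
    (hA : ∀ u ∈ A, ∑ j, u j = h)
    (v : Fin n → ℕ) (hv : ∑ j, v j = h)
    (hAlex : ∀ u : Fin n → ℕ, u ∈ Alex ↔ ((∑ j, u j = h) ∧ vlexLe v u))
    (hcard : Alex.card = A.card) :
    (Alex + Finset.image (fun j : Fin n => (Pi.single j 1 : Fin n → ℕ)) Finset.univ).card
      ≤ (A + Finset.image (fun j : Fin n => (Pi.single j 1 : Fin n → ℕ)) Finset.univ).card := by
  refine Macaulay.lexMinimizesUpShadow n hA (fun u hu => ((hAlex u).1 hu).1)
    (fun u hu w hw huw => ?_) hcard.le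
  obtain ⟨hsum, hvu⟩ := (hAlex u).1 hu
  exact (hAlex w).2 ⟨hw.trans hsum,
    Macaulay.vlexLe_iff.2 ((Macaulay.vlexLe_iff.1 hvu).trans huw)⟩
end
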